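/- Let a, b, c be positive integers with at least one of a, b, c at least 2, and let x ≥ √2 be a real number. Then x^(a+b+c−1) + (−1)^(a+b)·x^c + (−1)^(a+c)·x^b + (−1)^(b+c)·x^a + (−1)^(a+b+c)·(x−1) ≤ x^(a+b+c−1)·(1 + 1/x + 1/x^3 + 1/x^4). -/

import Mathlib

/-!
Write `n = a + b + c`. After cancelling `x ^ (n - 1)`, the claim bounds the four signed terms by
`x ^ (n - 2) + x ^ (n - 4) + x ^ (n - 5)`.

If the parities of `a, b, c` are not all equal, exactly one exponent (say `c`) differs in parity
from the other two. Only `x ^ c ≤ x ^ (n - 2)` carries a plus sign among the three powers, and the term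
`± (x - 1)` is either nonpositive or absorbed by `-x ^ a - x ^ b`.

If all parities are equal, order the exponents as `a ≤ b ≤ c`. Two powers are absorbed by
`x ^ c + x ^ b ≤ 2 * x ^ c ≤ x ^ (c + 2) ≤ x ^ (n - 2)`, which is where `x ^ 2 ≥ 2` is used, and the
rest is bounded by `x ^ (n - 4) + x ^ (n - 5)`. The odd triples `(1, 1, c)` are treated separately,
with equality for `(1, 1, 3)`.
-/

lemma theta_rhs_eq {n : ℕ} (hn : 5 ≤ n) {x : ℝ} (hx : 0 < x) :
    x ^ (n - 1) * (1 + 1/x + 1/x^3 + 1/x^4)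
      = x ^ (n - 1) + x ^ (n - 2) + x ^ (n - 4) + x ^ (n - 5) := by
  obtain ⟨k, rfl⟩ := Nat.exists_eq_add_of_le' hn
  simp only [Nat.add_sub_cancel, show k + 5 - 1 = k + 4 by omega, show k + 5 - 2 = k + 3 by omega,
    show k + 5 - 4 = k + 1 by omega]
  field_simp
  ring

/-- A lower bound for the right-hand side that stays valid for `n < 5`, where `x ^ (n - 5)` would
be misread because of truncated subtraction. -/
lemma theta_rhs_ge {n : ℕ} (hn : 2 ≤ n) {x : ℝ} (hx : 0 < x) :
    x ^ (n - 1) + x ^ (n - 2) ≤ x ^ (n - 1) * (1 + 1/x + 1/x^3 + 1/x^4) := by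
  obtain ⟨k, rfl⟩ := Nat.exists_eq_add_of_le' hn
  simp only [Nat.add_sub_cancel, show k + 2 - 1 = k + 1 by omega]
  have h1 : x ^ (k + 1) * (1 + 1/x) = x ^ (k + 1) + x ^ k := by
    field_simp
    ring
  have h2 : 0 ≤ x ^ (k + 1) * (1/x^3 + 1/x^4) := by positivity
  linarith

lemma theta_even {a b c : ℕ} (ha : 2 ≤ a) (hab : a ≤ b) (hbc : b ≤ c) {x : ℝ}
    (h1 : 1 ≤ x) (h2 : 2 ≤ x ^ 2) :
    x ^ c + x ^ b + x ^ a + (x - 1)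
      ≤ x ^ (a + b + c - 2) + x ^ (a + b + c - 4) + x ^ (a + b + c - 5) := by
  have e1 : x ^ b ≤ x ^ c := pow_le_pow_right₀ h1 hbc
  have e2 : x ^ a ≤ x ^ (a + b + c - 4) := pow_le_pow_right₀ h1 (by omega)
  have e3 : x ^ (c + 2) ≤ x ^ (a + b + c - 2) := pow_le_pow_right₀ h1 (by omega)
  have e4 : x ^ 1 ≤ x ^ (a + b + c - 5) := pow_le_pow_right₀ h1 (by omega)
  have e5 : x ^ c * 2 ≤ x ^ c * x ^ 2 := mul_le_mul_of_nonneg_left h2 (by positivity)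
  rw [← pow_add] at e5
  linarith

lemma theta_odd {a b c : ℕ} (ha : Odd a) (hb : Odd b) (hab : a ≤ b) (hbc : b ≤ c) (hc : 3 ≤ c)
    {x : ℝ} (h1 : 1 ≤ x) (h2 : 2 ≤ x ^ 2) :
    x ^ c + x ^ b + x ^ a - (x - 1)
      ≤ x ^ (a + b + c - 2) + x ^ (a + b + c - 4) + x ^ (a + b + c - 5) := by
  have ha0 : 1 ≤ a := ha.pos
  by_cases hb1 : b = 1
  · obtain rfl : a = 1 := by omega
    subst hb1
    rw [show 1 + 1 + c - 2 = c by omega]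
    have e1 : x ^ 1 ≤ x ^ (1 + 1 + c - 4) := pow_le_pow_right₀ h1 (by omega)
    have e2 : 1 ≤ x ^ (1 + 1 + c - 5) := one_le_pow₀ h1
    linarith
  · have hb3 : 3 ≤ b := by obtain ⟨k, rfl⟩ := hb; omega
    have e1 : x ^ b ≤ x ^ c := pow_le_pow_right₀ h1 hbc
    have e2 : x ^ a ≤ x ^ (a + b + c - 4) := pow_le_pow_right₀ h1 (by omega)
    have e3 : x ^ (c + 2) ≤ x ^ (a + b + c - 2) := pow_le_pow_right₀ h1 (by omega)
    have e4 : 0 ≤ x ^ (a + b + c - 5) := by positivity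
    have e5 : x ^ c * 2 ≤ x ^ c * x ^ 2 := mul_le_mul_of_nonneg_left h2 (by positivity)
    rw [← pow_add] at e5
    linarith

lemma theta_ordered {a b c : ℕ} (ha : 1 ≤ a) (hab : a ≤ b) (hbc : b ≤ c) (hc : 2 ≤ c) {x : ℝ}
    (h1 : 1 ≤ x) (h2 : 2 ≤ x ^ 2) :
    x ^ (a + b + c - 1) + (-1 : ℝ) ^ (a + b) * x ^ c + (-1 : ℝ) ^ (a + c) * x ^ b
      + (-1 : ℝ) ^ (b + c) * x ^ a + (-1 : ℝ) ^ (a + b + c) * (x - 1)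
    ≤ x ^ (a + b + c - 1) * (1 + 1/x + 1/x^3 + 1/x^4) := by
  have hx0 : 0 < x := by linarith
  have hge := theta_rhs_ge (n := a + b + c) (by omega) hx0
  have pa : x ^ 1 ≤ x ^ a := pow_le_pow_right₀ h1 ha
  have pb : x ^ 1 ≤ x ^ b := pow_le_pow_right₀ h1 (by omega)
  have pc : x ^ 1 ≤ x ^ c := pow_le_pow_right₀ h1 (by omega)
  have qa : x ^ a ≤ x ^ (a + b + c - 2) := pow_le_pow_right₀ h1 (by omega)
  have qb : x ^ b ≤ x ^ (a + b + c - 2) := pow_le_pow_right₀ h1 (by omega)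
  have qc : x ^ c ≤ x ^ (a + b + c - 2) := pow_le_pow_right₀ h1 (by omega)
  simp only [pow_add (-1 : ℝ)]
  rcases a.even_or_odd with par_a | par_a <;> rcases b.even_or_odd with par_b | par_b <;>
    rcases c.even_or_odd with par_c | par_c <;>
    rw [par_a.neg_one_pow, par_b.neg_one_pow, par_c.neg_one_pow]
  -- the first and last parity patterns are the all-even and all-odd ones
  · have ha2 : 2 ≤ a := by obtain ⟨k, rfl⟩ := par_a; omega
    rw [theta_rhs_eq (by omega) hx0]
    linarith [theta_even ha2 hab hbc h1 h2]
  iterate 6 linarith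
  · have hc3 : 3 ≤ c := by obtain ⟨k, rfl⟩ := par_c; omega
    rw [theta_rhs_eq (by omega) hx0]
    linarith [theta_odd par_a par_b hab hbc hc3 h1 h2]

/-- **Lemma 4.4** (numerical core).  Let `a, b, c` be positive integers with at least one
of them at least `2`, and let `x ≥ √2` be a real number.  Then
`x^(a+b+c-1) + (-1)^(a+b)·x^c + (-1)^(a+c)·x^b + (-1)^(b+c)·x^a + (-1)^(a+b+c)·(x-1)
  ≤ x^(a+b+c-1) · (1 + 1/x + 1/x^3 + 1/x^4)`. -/
theorem statement_7 (a b c : ℕ) (ha : 1 ≤ a) (hb : 1 ≤ b) (hc : 1 ≤ c)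
    (h2 : 2 ≤ a ∨ 2 ≤ b ∨ 2 ≤ c)
    (x : ℝ) (hx : Real.sqrt 2 ≤ x) :
    x ^ (a + b + c - 1) + (-1 : ℝ) ^ (a + b) * x ^ c + (-1 : ℝ) ^ (a + c) * x ^ b
      + (-1 : ℝ) ^ (b + c) * x ^ a + (-1 : ℝ) ^ (a + b + c) * (x - 1)
    ≤ x ^ (a + b + c - 1) * (1 + 1/x + 1/x^3 + 1/x^4) := by
  have hs : 2 ≤ x ^ 2 := (Real.sqrt_le_left (by linarith [Real.sqrt_nonneg 2])).mp hx
  have h1 : 1 ≤ x := le_trans (Real.one_le_sqrt.mpr (by norm_num)) hx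
  rcases le_total a b with hab | hab <;> rcases le_total b c with hbc | hbc <;>
    rcases le_total a c with hac | hac
  · have h := theta_ordered ha hab hbc (by omega) h1 hs
    exact h
  · have h := theta_ordered ha hab hbc (by omega) h1 hs
    exact h
  · have h := theta_ordered ha hac hbc (by omega) h1 hs
    rw [show a + c + b = a + b + c by omega, add_comm c b] at h
    linarith
  · have h := theta_ordered hc hac hab (by omega) h1 hs
    rw [show c + a + b = a + b + c by omega, add_comm c a, add_comm c b] at h
    linarith
  · have h := theta_ordered hb hab hac (by omega) h1 hs
    rw [add_comm b a] at h
    linarith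
  · have h := theta_ordered hb hbc hac (by omega) h1 hs
    rw [show b + c + a = a + b + c by omega, add_comm b a, add_comm c a] at h
    linarith
  · have h := theta_ordered hc hbc hab (by omega) h1 hs
    rw [show c + b + a = a + b + c by omega, add_comm c b, add_comm c a, add_comm b a] at h
    linarith
  · have h := theta_ordered hc hbc hab (by omega) h1 hs
    rw [show c + b + a = a + b + c by omega, add_comm c b, add_comm c a, add_comm b a] at h
    linarith
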